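/- arXiv:1710.08837 — 4 statements merged into one kernel-verified Lean document; each statement's English description precedes it below -/
import Mathlib

section
/- For each covering pair T' ⋗ T in tors Λ, there exists an indecomposable module M, unique up to isomorphism, such that T' = Filt(T ∪ {M}); moreover this M is a minimal extending module for T, so the map sending T' = Filt(T ∪ {M}) to [M] is inverse to the bijection η_T : [M] ↦ Filt(T ∪ {M}) from ME(T) to the upper covers of T. -/
/-!
Common definitions: the category `mod Λ` of finite(-dimensional) left `Λ`-modules,
torsion(-free) classes, filtration closures, bricks, minimal (co-)extending modules,
and the lattice-theoretic notions for `tors Λ` (ordered by containment).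
-/

/-- A bundled (left) `Λ`-module with carrier in `Type`. -/
structure Mdl (Λ : Type) [Ring Λ] : Type 1 where
  carrier : Type
  [isAddCommGroup : AddCommGroup carrier]
  [isModule : Module Λ carrier]

attribute [instance] Mdl.isAddCommGroup Mdl.isModule

instance {Λ : Type} [Ring Λ] : CoeSort (Mdl Λ) Type :=
  ⟨Mdl.carrier⟩

variable (Λ : Type) [Ring Λ]

/-- Bundle a module. -/
def Mdl.of (X : Type) [AddCommGroup X] [Module Λ X] : Mdl Λ :=
  { carrier := X }

/-- `M` and `N` are isomorphic `Λ`-modules. -/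
def MIso (M N : Mdl Λ) : Prop :=
  Nonempty (M.carrier ≃ₗ[Λ] N.carrier)

/-- `N` is a factor (quotient) module of `M`. -/
def IsFactor (M N : Mdl Λ) : Prop :=
  ∃ f : M.carrier →ₗ[Λ] N.carrier, Function.Surjective f

/-- `N` is a proper factor of `M` (a quotient by a nonzero submodule). -/
def IsProperFactor (M N : Mdl Λ) : Prop :=
  ∃ f : M.carrier →ₗ[Λ] N.carrier, Function.Surjective f ∧ ¬ Function.Injective f

/-- `N` is (isomorphic to) a submodule of `M`. -/
def IsSubmoduleOf (N M : Mdl Λ) : Prop :=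
  ∃ f : N.carrier →ₗ[Λ] M.carrier, Function.Injective f

/-- `N` is (isomorphic to) a proper submodule of `M`. -/
def IsProperSubmoduleOf (N M : Mdl Λ) : Prop :=
  ∃ f : N.carrier →ₗ[Λ] M.carrier, Function.Injective f ∧ ¬ Function.Surjective f

/-- `D` is (isomorphic to) a direct summand of `N`. -/
def IsSummand (D N : Mdl Λ) : Prop :=
  ∃ (i : D.carrier →ₗ[Λ] N.carrier) (p : N.carrier →ₗ[Λ] D.carrier),
    p.comp i = LinearMap.id

/-- `0 → A --f--> M --g--> B → 0` is a short exact sequence. -/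
def IsSES {A M B : Mdl Λ} (f : A.carrier →ₗ[Λ] M.carrier)
    (g : M.carrier →ₗ[Λ] B.carrier) : Prop :=
  Function.Injective f ∧ Function.Surjective g ∧ LinearMap.range f = LinearMap.ker g

/-- The short exact sequence `0 → A --f--> M --g--> B → 0` splits. -/
def SplitsSES {A M B : Mdl Λ} (_f : A.carrier →ₗ[Λ] M.carrier)
    (g : M.carrier →ₗ[Λ] B.carrier) : Prop :=
  ∃ s : B.carrier →ₗ[Λ] M.carrier, g.comp s = LinearMap.id

/-- `M` is an extension of `B` by `A`, i.e. there is a s.e.s. `0 → A → M → B → 0`. -/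
def ExtOf (M A B : Mdl Λ) : Prop :=
  ∃ (f : A.carrier →ₗ[Λ] M.carrier) (g : M.carrier →ₗ[Λ] B.carrier), IsSES Λ f g

/-- A torsion class in `mod Λ`: a class of finite(-dimensional) modules containing `0`
and closed under isomorphisms, factor modules and extensions. -/
structure IsTorsionClass (T : Set (Mdl Λ)) : Prop where
  fin : ∀ M ∈ T, Module.Finite Λ M.carrier
  zero_mem : ∀ M : Mdl Λ, Subsingleton M.carrier → M ∈ T
  iso_closed : ∀ M ∈ T, ∀ N : Mdl Λ, MIso Λ M N → N ∈ T
  factor_closed : ∀ M ∈ T, ∀ N : Mdl Λ, IsFactor Λ M N → N ∈ T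
  ext_closed : ∀ A ∈ T, ∀ B ∈ T, ∀ M : Mdl Λ, ExtOf Λ M A B → M ∈ T

/-- A torsion-free class in `mod Λ`: a class of finite(-dimensional) modules containing `0`
and closed under isomorphisms, submodules and extensions. -/
structure IsTorsionFreeClass (F : Set (Mdl Λ)) : Prop where
  fin : ∀ M ∈ F, Module.Finite Λ M.carrier
  zero_mem : ∀ M : Mdl Λ, Subsingleton M.carrier → M ∈ F
  iso_closed : ∀ M ∈ F, ∀ N : Mdl Λ, MIso Λ M N → N ∈ F
  sub_closed : ∀ M ∈ F, ∀ N : Mdl Λ, IsSubmoduleOf Λ N M → N ∈ F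
  ext_closed : ∀ A ∈ F, ∀ B ∈ F, ∀ M : Mdl Λ, ExtOf Λ M A B → M ∈ F

/-- `Filt S M`: `M` admits a filtration `0 = M₀ ⊆ M₁ ⊆ ⋯ ⊆ M_l = M` whose successive
quotients are isomorphic to modules in `S`. -/
inductive Filt (S : Set (Mdl Λ)) : Mdl Λ → Prop
  | of_subsingleton (M : Mdl Λ) (h : Subsingleton M.carrier) : Filt S M
  | step (M : Mdl Λ) (N : Submodule Λ M.carrier) (X : Mdl Λ) (hX : X ∈ S)
      (hN : Filt S (Mdl.of Λ N)) (e : Nonempty ((M.carrier ⧸ N) ≃ₗ[Λ] X.carrier)) :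
      Filt S M

/-- The filtration closure `Filt(S)` as a set of modules. -/
def FiltSet (S : Set (Mdl Λ)) : Set (Mdl Λ) := {M | Filt Λ S M}

/-- `Gen(M)`: the class of factor modules of finite direct sums of copies of `M`. -/
def GenSet (M : Mdl Λ) : Set (Mdl Λ) :=
  {N | ∃ (n : ℕ) (f : (Fin n → M.carrier) →ₗ[Λ] N.carrier), Function.Surjective f}

/-- `T^⊥ = {X ∈ mod Λ : Hom_Λ(N, X) = 0 for all N ∈ T}`. -/
def Perp (T : Set (Mdl Λ)) : Set (Mdl Λ) :=
  {X | Module.Finite Λ X.carrier ∧ ∀ N ∈ T, ∀ f : N.carrier →ₗ[Λ] X.carrier, f = 0}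

/-- A brick: a module (in `mod Λ`) whose endomorphism ring is a division ring,
i.e. it is nonzero and every nonzero endomorphism is invertible. -/
def IsBrick (M : Mdl Λ) : Prop :=
  Module.Finite Λ M.carrier ∧ Nontrivial M.carrier ∧
    ∀ f : M.carrier →ₗ[Λ] M.carrier, f ≠ 0 → Function.Bijective f

/-- An indecomposable module: nonzero, and not the direct sum of two nonzero submodules. -/
def Indec (M : Mdl Λ) : Prop :=
  Nontrivial M.carrier ∧
    ∀ p q : Submodule Λ M.carrier, IsCompl p q → p = ⊥ ∨ q = ⊥

/-- `M` is a minimal extending module for the torsion class `T`: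
(P1) every proper factor of `M` is in `T`;
(P2) if `0 → M → X → N → 0` is non-split exact with `N ∈ T`, then `X ∈ T`;
(P3) `Hom_Λ(T, M) = 0`. -/
structure IsMinExt (T : Set (Mdl Λ)) (M : Mdl Λ) : Prop where
  fin : Module.Finite Λ M.carrier
  p1 : ∀ N : Mdl Λ, IsProperFactor Λ M N → N ∈ T
  p2 : ∀ (X N : Mdl Λ) (f : M.carrier →ₗ[Λ] X.carrier) (g : X.carrier →ₗ[Λ] N.carrier),
      IsSES Λ f g → ¬ SplitsSES Λ f g → N ∈ T → X ∈ T
  p3 : ∀ N ∈ T, ∀ f : N.carrier →ₗ[Λ] M.carrier, f = 0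

/-- `M` is a minimal co-extending module for the torsion-free class `F`:
(P1') every proper submodule of `M` is in `F`;
(P2') if `0 → F' → X → M → 0` is non-split exact with `F' ∈ F`, then `X ∈ F`;
(P3') `Hom_Λ(M, F) = 0`. -/
structure IsMinCoExt (F : Set (Mdl Λ)) (M : Mdl Λ) : Prop where
  fin : Module.Finite Λ M.carrier
  p1 : ∀ N : Mdl Λ, IsProperSubmoduleOf Λ N M → N ∈ F
  p2 : ∀ (X F' : Mdl Λ) (f : F'.carrier →ₗ[Λ] X.carrier) (g : X.carrier →ₗ[Λ] M.carrier),
      IsSES Λ f g → ¬ SplitsSES Λ f g → F' ∈ F → X ∈ F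
  p3 : ∀ F' ∈ F, ∀ f : M.carrier →ₗ[Λ] F'.carrier, f = 0

/-- `T'` covers `T` in the lattice `tors Λ` of torsion classes ordered by containment. -/
def TorsCovers (T' T : Set (Mdl Λ)) : Prop :=
  IsTorsionClass Λ T' ∧ IsTorsionClass Λ T ∧ T ⊂ T' ∧
    ∀ Y : Set (Mdl Λ), IsTorsionClass Λ Y → T ⊂ Y → Y ⊆ T' → Y = T'

/-- `F'` covers `F` in the lattice `torf Λ` of torsion-free classes ordered by containment. -/
def TorfCovers (F' F : Set (Mdl Λ)) : Prop :=
  IsTorsionFreeClass Λ F' ∧ IsTorsionFreeClass Λ F ∧ F ⊂ F' ∧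
    ∀ Y : Set (Mdl Λ), IsTorsionFreeClass Λ Y → F ⊂ Y → Y ⊆ F' → Y = F'

/-- The join `⋁ A` of a family of torsion classes in `tors Λ`: the smallest torsion
class containing all members of `A`. -/
def TorsJoin (A : Set (Set (Mdl Λ))) : Set (Mdl Λ) :=
  ⋂₀ {T : Set (Mdl Λ) | IsTorsionClass Λ T ∧ ∀ S ∈ A, S ⊆ T}

/-- A completely join-irreducible element of `tors Λ`: a torsion class `T` such that
`T ∈ A` whenever `A` is a set of torsion classes with `⋁ A = T`. -/
def CompletelyJoinIrred (T : Set (Mdl Λ)) : Prop :=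
  IsTorsionClass Λ T ∧
    ∀ A : Set (Set (Mdl Λ)), (∀ S ∈ A, IsTorsionClass Λ S) → TorsJoin Λ A = T → T ∈ A

/-- The join representation `⋁ A` is irredundant in `tors Λ`:
every proper subset has strictly smaller join. -/
def TorsIrredundant (A : Set (Set (Mdl Λ))) : Prop :=
  ∀ B : Set (Set (Mdl Λ)), B ⊂ A → TorsJoin Λ B ⊂ TorsJoin Λ A

/-- `A` is the canonical join representation of its join in `tors Λ` (equivalently, a face
of the canonical join complex `Γ(tors Λ)`): `⋁ A` is irredundant, and `A ≪ B` for every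
irredundant join representation `⋁ B` of the same element. -/
def TorsCJR (A : Set (Set (Mdl Λ))) : Prop :=
  (∀ S ∈ A, IsTorsionClass Λ S) ∧ TorsIrredundant Λ A ∧
    ∀ B : Set (Set (Mdl Λ)), (∀ S ∈ B, IsTorsionClass Λ S) →
      TorsJoin Λ B = TorsJoin Λ A → TorsIrredundant Λ B → ∀ a ∈ A, ∃ b ∈ B, a ⊆ b

/-- `M` and `N` are hom-orthogonal: `Hom_Λ(M, N) = 0` and `Hom_Λ(N, M) = 0`. -/
def HomOrthogonal (M N : Mdl Λ) : Prop :=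
  (∀ f : M.carrier →ₗ[Λ] N.carrier, f = 0) ∧ ∀ f : N.carrier →ₗ[Λ] M.carrier, f = 0

section Helpers
variable {Λ}

/-- Factoring a map killing the kernel through a surjection. -/
lemma factor_thru {A B C : Type} [AddCommGroup A] [Module Λ A] [AddCommGroup B] [Module Λ B]
    [AddCommGroup C] [Module Λ C] (g : A →ₗ[Λ] B) (hg : Function.Surjective g)
    (h : A →ₗ[Λ] C) (hk : LinearMap.ker g ≤ LinearMap.ker h) :
    ∃ h' : B →ₗ[Λ] C, h'.comp g = h := by
  refine ⟨((LinearMap.ker g).liftQ h hk).comp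
    (g.quotKerEquivOfSurjective hg).symm.toLinearMap, ?_⟩
  ext x
  have : (g.quotKerEquivOfSurjective hg).symm (g x) = (LinearMap.ker g).mkQ x := by
    rw [LinearEquiv.symm_apply_eq]; rfl
  simp [this]

lemma filt_mono_iso {S : Set (Mdl Λ)} {M : Mdl Λ} (hM : Filt Λ S M) :
    ∀ M' : Mdl Λ, (∃ f : M.carrier →ₗ[Λ] M'.carrier, Function.Surjective f) →
    (∀ X ∈ S, ∀ Y : Mdl Λ, IsFactor Λ X Y → ∃ Z ∈ S, MIso Λ Y Z) → Filt Λ S M' := by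
  induction hM with
  | of_subsingleton M h =>
    rintro M' ⟨f, hf⟩ _
    exact Filt.of_subsingleton M' hf.subsingleton
  | step M N X hX hN e ih =>
    rintro M' ⟨f, hf⟩ hS
    obtain ⟨e⟩ := e
    have hle : N ≤ (N.map f).comap f := Submodule.le_comap_map f N
    have hs : Function.Surjective (N.mapQ (N.map f) f hle) := by
      intro y
      obtain ⟨y, rfl⟩ := Submodule.mkQ_surjective _ y
      obtain ⟨x, rfl⟩ := hf y
      exact ⟨N.mkQ x, rfl⟩
    obtain ⟨Z, hZ, ⟨e'⟩⟩ := hS X hX (Mdl.of Λ (M'.carrier ⧸ N.map f))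
      ⟨(N.mapQ (N.map f) f hle).comp e.symm.toLinearMap, hs.comp e.symm.surjective⟩
    refine Filt.step M' (N.map f) Z hZ (ih _ ?_ hS) ⟨e'⟩
    refine ⟨(f.submoduleMap N : N →ₗ[Λ] N.map f), f.submoduleMap_surjective N⟩

lemma filt_iso {S : Set (Mdl Λ)} {M M' : Mdl Λ} (hM : Filt Λ S M)
    (e : M.carrier ≃ₗ[Λ] M'.carrier) : Filt Λ S M' := by
  revert M'
  induction hM with
  | of_subsingleton M h =>
    intro M' e
    exact Filt.of_subsingleton M' e.surjective.subsingleton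
  | step M N X hX hN e ih =>
    intro M' f
    obtain ⟨e⟩ := e
    refine Filt.step M' (N.map f.toLinearMap) X hX
      (ih (M' := Mdl.of Λ (N.map f.toLinearMap)) (f.submoduleMap N)) ⟨?_⟩
    exact (Submodule.Quotient.equiv N (N.map f.toLinearMap) f rfl).symm.trans e

lemma filt_ext {S : Set (Mdl Λ)} {B : Mdl Λ} (hB : Filt Λ S B) :
    ∀ (X : Mdl Λ) (g : X.carrier →ₗ[Λ] B.carrier), Function.Surjective g →
      Filt Λ S (Mdl.of Λ (LinearMap.ker g)) → Filt Λ S X := by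
  induction hB with
  | of_subsingleton B h =>
    intro X g hg hk
    have : LinearMap.ker g = ⊤ := by
      ext x; simp [LinearMap.mem_ker, Subsingleton.elim (g x) 0]
    exact filt_iso hk (LinearEquiv.ofTop _ this)
  | step B N Y hY hN e ih =>
    intro X g hg hk
    obtain ⟨e⟩ := e
    have hs : Function.Surjective (N.mkQ.comp g) := (Submodule.mkQ_surjective N).comp hg
    have hker : N.comap g = LinearMap.ker (N.mkQ.comp g) := by
      rw [LinearMap.ker_comp, Submodule.ker_mkQ]
    refine Filt.step X (N.comap g) Y hY ?_
      ⟨((Submodule.quotEquivOfEq _ _ hker).trans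
        ((N.mkQ.comp g).quotKerEquivOfSurjective hs)).trans e⟩
    let r : (N.comap g) →ₗ[Λ] N := g.restrict (fun x hx => hx)
    refine ih (Mdl.of Λ (N.comap g)) r ?_ ?_
    · rintro ⟨y, hy⟩
      obtain ⟨x, rfl⟩ := hg y
      exact ⟨⟨x, hy⟩, rfl⟩
    · refine filt_iso hk (LinearEquiv.symm (LinearEquiv.ofBijective
        (LinearMap.codRestrict (LinearMap.ker g)
          ((N.comap g).subtype.comp (LinearMap.ker r).subtype) ?_) ⟨?_, ?_⟩))
      · rintro ⟨⟨x, hx⟩, h⟩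
        have := congrArg Subtype.val (LinearMap.mem_ker.1 h)
        exact this
      · intro a b h
        have := congrArg Subtype.val h
        exact Subtype.ext (Subtype.ext this)
      · rintro ⟨x, hx⟩
        have hx' : g x = 0 := hx
        refine ⟨⟨⟨x, ?_⟩, ?_⟩, rfl⟩
        · change g x ∈ N
          rw [hx']; exact N.zero_mem
        · exact LinearMap.mem_ker.2 (Subtype.ext hx')

lemma filt_of_mem {S : Set (Mdl Λ)} {X : Mdl Λ} (hX : X ∈ S) : Filt Λ S X :=
  Filt.step X ⊥ X hX
    (Filt.of_subsingleton _ (inferInstanceAs (Subsingleton (⊥ : Submodule Λ X.carrier))))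
    ⟨Submodule.quotEquivOfEqBot _ rfl⟩

lemma filt_sub {S T' : Set (Mdl Λ)} (hT : IsTorsionClass Λ T') (hS : S ⊆ T') {X : Mdl Λ}
    (hX : Filt Λ S X) : X ∈ T' := by
  induction hX with
  | of_subsingleton M h => exact hT.zero_mem M h
  | step M N X hX hN e ih =>
    obtain ⟨e⟩ := e
    refine hT.ext_closed _ ih _ (hS hX) M ⟨N.subtype, e.toLinearMap.comp N.mkQ,
      N.injective_subtype, e.surjective.comp N.mkQ_surjective, ?_⟩
    rw [LinearEquiv.ker_comp, Submodule.ker_mkQ]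
    exact N.range_subtype

lemma filt_bottom {S : Set (Mdl Λ)} {X : Mdl Λ} (hX : Filt Λ S X) :
    Nontrivial X.carrier → ∃ Y ∈ S, Nontrivial Y.carrier ∧
      ∃ f : Y.carrier →ₗ[Λ] X.carrier, Function.Injective f := by
  induction hX with
  | of_subsingleton M h => intro h'; exact absurd h (not_subsingleton_iff_nontrivial.2 h')
  | step M N X hX hN e ih =>
    intro h
    obtain ⟨e⟩ := e
    by_cases hN0 : N = ⊥
    · let e' := (Submodule.quotEquivOfEqBot N hN0).symm.trans e
      exact ⟨X, hX, e'.symm.toEquiv.nontrivial, e'.symm.toLinearMap, e'.symm.injective⟩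
    · obtain ⟨Y, hY, hn, f, hf⟩ := ih (Submodule.nontrivial_iff_ne_bot.2 hN0)
      exact ⟨Y, hY, hn, N.subtype.comp f, N.injective_subtype.comp hf⟩

/-- If `B ∈ T^⊥` is nonzero and lies in `Filt (T ∪ {M})`, then `M` embeds in `B`. -/
lemma embeds {T : Set (Mdl Λ)} {M B : Mdl Λ} (hn : Nontrivial B.carrier)
    (hB : Filt Λ (insert M T) B) (hp : ∀ N ∈ T, ∀ f : N.carrier →ₗ[Λ] B.carrier, f = 0) :
    ∃ f : M.carrier →ₗ[Λ] B.carrier, Function.Injective f := by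
  obtain ⟨Y, hY, hnY, f, hf⟩ := filt_bottom hB hn
  rcases hY with rfl | hY
  · exact ⟨f, hf⟩
  · exfalso
    obtain ⟨a, b, hab⟩ := hnY
    exact hab (hf (by rw [hp Y hY f]; rfl))

lemma exists_min [IsNoetherianRing Λ] {T T' : Set (Mdl Λ)} (hT : IsTorsionClass Λ T)
    (hT' : IsTorsionClass Λ T') (h : T ⊂ T') :
    ∃ M ∈ T', M ∉ T ∧ ∀ N : Mdl Λ, IsProperFactor Λ M N → N ∈ T := by
  obtain ⟨X, hX, hXT⟩ := Set.exists_of_ssubset h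
  have := hT'.fin X hX
  have : IsNoetherian Λ X.carrier := isNoetherian_of_isNoetherianRing_of_finite Λ X.carrier
  obtain ⟨K, hK, hmax⟩ := set_has_maximal_iff_noetherian.2 this
    {K : Submodule Λ X.carrier | Mdl.of Λ (X.carrier ⧸ K) ∉ T}
    ⟨⊥, fun hb => hXT (hT.iso_closed _ hb X ⟨Submodule.quotEquivOfEqBot _ rfl⟩)⟩
  refine ⟨Mdl.of Λ (X.carrier ⧸ K), hT'.factor_closed X hX _ ⟨K.mkQ, K.mkQ_surjective⟩, hK, ?_⟩
  rintro N ⟨(f : (X.carrier ⧸ K) →ₗ[Λ] N.carrier), hf, hi⟩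
  by_contra hN
  have hs : Function.Surjective (f.comp K.mkQ) := hf.comp K.mkQ_surjective
  refine hmax (LinearMap.ker (f.comp K.mkQ)) ?_ ?_
  · intro hq
    exact hN (hT.iso_closed _ hq N ⟨(f.comp K.mkQ).quotKerEquivOfSurjective hs⟩)
  · refine lt_of_le_of_ne ?_ ?_
    · intro x hx
      have : K.mkQ x = 0 := by simpa using hx
      simp [LinearMap.mem_ker, -Submodule.mkQ_apply, this]
    · intro heq
      apply hi
      refine (injective_iff_map_eq_zero f).2 ?_
      intro y hy
      obtain ⟨x, rfl⟩ := K.mkQ_surjective y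
      have hx : x ∈ LinearMap.ker (f.comp K.mkQ) := hy
      rw [← heq] at hx
      simpa using hx

lemma inj_of_endo {T : Set (Mdl Λ)} {M N : Mdl Λ} (hT : IsTorsionClass Λ T) (hM : M ∉ T)
    (hp1 : ∀ N : Mdl Λ, IsProperFactor Λ M N → N ∈ T) :
    ∀ N ∈ T, ∀ f : N.carrier →ₗ[Λ] M.carrier, f = 0 := by
  intro N hN f
  by_contra hf
  apply hM
  have h1 : Mdl.of Λ (LinearMap.range f) ∈ T :=
    hT.factor_closed N hN _ ⟨f.rangeRestrict, f.surjective_rangeRestrict⟩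
  have h2 : Mdl.of Λ (M.carrier ⧸ LinearMap.range f) ∈ T := by
    refine hp1 _ ⟨(LinearMap.range f).mkQ, Submodule.mkQ_surjective _, ?_⟩
    intro hi
    have := LinearMap.ker_eq_bot.2 hi
    exact hf (LinearMap.range_eq_bot.1 ((Submodule.ker_mkQ _).symm.trans this))
  refine hT.ext_closed _ h1 _ h2 M ⟨(LinearMap.range f).subtype, (LinearMap.range f).mkQ,
    Submodule.injective_subtype _, Submodule.mkQ_surjective _, ?_⟩
  exact (Submodule.range_subtype _).trans (Submodule.ker_mkQ _).symm

lemma perp_torsion {T' : Set (Mdl Λ)} (hT' : IsTorsionClass Λ T') (M : Mdl Λ) :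
    IsTorsionClass Λ {X | X ∈ T' ∧ ∀ f : X.carrier →ₗ[Λ] M.carrier, f = 0} := by
  have hfac : ∀ X ∈ {X | X ∈ T' ∧ ∀ f : X.carrier →ₗ[Λ] M.carrier, f = 0}, ∀ N : Mdl Λ,
      IsFactor Λ X N → N ∈ {X | X ∈ T' ∧ ∀ f : X.carrier →ₗ[Λ] M.carrier, f = 0} := by
    rintro X ⟨hX, h0⟩ N ⟨g, hg⟩
    refine ⟨hT'.factor_closed X hX N ⟨g, hg⟩, fun f => ?_⟩
    ext y
    obtain ⟨x, rfl⟩ := hg y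
    exact LinearMap.congr_fun (h0 (f.comp g)) x
  refine ⟨fun X hX => hT'.fin X hX.1, ?_, ?_, hfac, ?_⟩
  · intro X h
    refine ⟨hT'.zero_mem X h, fun f => ?_⟩
    ext x
    rw [Subsingleton.elim x 0]; simp
  · rintro X hX N ⟨e⟩
    exact hfac X hX N ⟨e.toLinearMap, e.surjective⟩
  · rintro A ⟨hA, hA0⟩ B ⟨hB, hB0⟩ X ⟨f, g, hi, hs, hr⟩
    refine ⟨hT'.ext_closed A hA B hB X ⟨f, g, hi, hs, hr⟩, fun h => ?_⟩
    obtain ⟨h', rfl⟩ := factor_thru g hs h (by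
      rw [← hr]
      rintro _ ⟨a, rfl⟩
      exact LinearMap.congr_fun (hA0 (h.comp f)) a)
    rw [hB0 h', LinearMap.zero_comp]

lemma exists_part [IsNoetherianRing Λ] [IsArtinianRing Λ] {T T' : Set (Mdl Λ)}
    (hcov : TorsCovers Λ T' T) :
    ∃ M : Mdl Λ, Indec Λ M ∧ IsMinExt Λ T M ∧ T' = FiltSet Λ (insert M T) := by
  obtain ⟨hT', hT, hlt, hmin⟩ := hcov
  obtain ⟨M, hMT', hMT, hp1⟩ := exists_min hT hT' hlt
  have hp3 := inj_of_endo (N := M) hT hMT hp1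
  have hfin := hT'.fin M hMT'
  have hntr : Nontrivial M.carrier := by
    by_contra h
    exact hMT (hT.zero_mem M (not_nontrivial_iff_subsingleton.1 h))
  have hperp : ∀ X ∈ T', (∀ f : X.carrier →ₗ[Λ] M.carrier, f = 0) → X ∈ T := by
    intro X hX h0
    by_contra hXT
    have := hmin _ (perp_torsion hT' M) ⟨fun N hN => ⟨hlt.1 hN, hp3 N hN⟩,
      fun hsub => hXT (hsub ⟨hX, h0⟩)⟩ (fun N hN => hN.1)
    rw [← this] at hMT'
    obtain ⟨a, b, hab⟩ := hntr
    have hid := hMT'.2 LinearMap.id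
    exact hab ((LinearMap.congr_fun hid a).trans (LinearMap.congr_fun hid b).symm)
  have hart : IsArtinian Λ M.carrier := isArtinian_of_fg_of_artinian' 
  have hendo : ∀ f : M.carrier →ₗ[Λ] M.carrier, f ≠ 0 → Function.Bijective f := by
    intro f hf
    have hi : Function.Injective f := by
      by_contra hi
      have hr : Mdl.of Λ (LinearMap.range f) ∈ T := by
        refine hp1 _ ⟨f.rangeRestrict, f.surjective_rangeRestrict, fun h => hi ?_⟩
        exact Subtype.val_injective.comp h
      have := hp3 _ hr (LinearMap.range f).subtype
      apply hf
      ext x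
      exact LinearMap.congr_fun this ⟨f x, x, rfl⟩
    exact ⟨hi, IsArtinian.surjective_of_injective_endomorphism f hi⟩
  refine ⟨M, ⟨hntr, ?_⟩, ⟨hfin, hp1, ?_, hp3⟩, ?_⟩
  · intro p q hpq
    by_contra hne
    push Not at hne
    obtain ⟨hp, hq⟩ := hne
    have hquot : ∀ r : Submodule Λ M.carrier, r ≠ ⊥ → Mdl.of Λ (M.carrier ⧸ r) ∈ T := by
      intro r hr
      refine hp1 _ ⟨r.mkQ, r.mkQ_surjective, fun hi => hr ?_⟩
      have := LinearMap.ker_eq_bot.2 hi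
      exact r.ker_mkQ.symm.trans this
    have hpT : Mdl.of Λ p ∈ T := hT.iso_closed _ (hquot q hq) _
      ⟨Submodule.quotientEquivOfIsCompl q p hpq.symm⟩
    refine hMT (hT.ext_closed _ hpT _ (hquot p hp) M ⟨p.subtype, p.mkQ,
      p.injective_subtype, p.mkQ_surjective, ?_⟩)
    exact p.range_subtype.trans p.ker_mkQ.symm
  · rintro X N f g ⟨hi, hs, hr⟩ hns hN
    refine hperp X (hT'.ext_closed M hMT' N (hlt.1 hN) X ⟨f, g, hi, hs, hr⟩) fun h => ?_
    by_contra hh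
    apply hns
    have hne : h.comp f ≠ 0 := by
      intro h0
      obtain ⟨h', rfl⟩ := factor_thru g hs h (by
        rw [← hr]
        rintro _ ⟨a, rfl⟩
        exact LinearMap.congr_fun h0 a)
      exact hh (by rw [hp3 N hN h', LinearMap.zero_comp])
    let e := LinearEquiv.ofBijective _ (hendo _ hne)
    let π : X.carrier →ₗ[Λ] X.carrier :=
      LinearMap.id - f.comp (e.symm.toLinearMap.comp h)
    have hgf : ∀ a, g (f a) = 0 := fun a => by
      have : f a ∈ LinearMap.ker g := hr ▸ ⟨a, rfl⟩
      exact this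
    obtain ⟨s, hsπ⟩ := factor_thru g hs π (by
      rw [← hr]
      rintro _ ⟨a, rfl⟩
      have : e.symm (h (f a)) = a := e.symm_apply_apply a
      simp [π, this])
    refine ⟨s, ?_⟩
    ext y
    obtain ⟨x, rfl⟩ := hs y
    have := LinearMap.congr_fun hsπ x
    simp only [LinearMap.comp_apply] at this
    simp [this, π, hgf]
  · have hS : ∀ X ∈ insert M T, ∀ Y : Mdl Λ, IsFactor Λ X Y →
        ∃ Z ∈ insert M T, MIso Λ Y Z := by
      rintro X (rfl | hX) Y ⟨f, hf⟩
      · by_cases hi : Function.Injective f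
        · exact ⟨X, Or.inl rfl, ⟨(LinearEquiv.ofBijective f ⟨hi, hf⟩).symm⟩⟩
        · exact ⟨Y, Or.inr (hp1 Y ⟨f, hf, hi⟩), ⟨LinearEquiv.refl _ _⟩⟩
      · exact ⟨Y, Or.inr (hT.factor_closed X hX Y ⟨f, hf⟩), ⟨LinearEquiv.refl _ _⟩⟩
    have hsub : FiltSet Λ (insert M T) ⊆ T' := fun X hX =>
      filt_sub hT' (Set.insert_subset hMT' hlt.1) hX
    refine (hmin _ ⟨fun X hX => hT'.fin X (hsub hX), ?_, ?_, ?_, ?_⟩ ⟨?_, ?_⟩ hsub).symm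
    · exact fun X h => Filt.of_subsingleton X h
    · rintro X hX N ⟨e⟩
      exact filt_iso hX e
    · intro X hX N hf
      exact filt_mono_iso hX N hf hS
    · rintro A hA B hB X ⟨f, g, hi, hs, hr⟩
      refine filt_ext hB X g hs (filt_iso hA ?_)
      exact (LinearEquiv.ofInjective f hi).trans (LinearEquiv.ofEq _ _ hr)
    · exact fun X hX => filt_of_mem (Or.inr hX)
    · exact fun h => hMT (h (filt_of_mem (Or.inl rfl)))

lemma uniq_part [IsNoetherianRing Λ] [IsArtinianRing Λ] {T T' : Set (Mdl Λ)} {B M : Mdl Λ}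
    (hT' : IsTorsionClass Λ T')
    (hB : Indec Λ B) (hBm : IsMinExt Λ T B) (hBT : T' = FiltSet Λ (insert B T))
    (hM : Indec Λ M) (hMT : T' = FiltSet Λ (insert M T)) : MIso Λ M B := by
  have hMm : M ∈ T' := by rw [hMT]; exact filt_of_mem (Or.inl rfl)
  have hBm' : B ∈ T' := by rw [hBT]; exact filt_of_mem (Or.inl rfl)
  have := hT'.fin B hBm'
  have hart : IsArtinian Λ B.carrier := isArtinian_of_fg_of_artinian'
  obtain ⟨f, hf⟩ := embeds (M := M) hB.1 (by rw [hMT] at hBm'; exact hBm') hBm.p3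
  have hp : ∀ N ∈ T, ∀ g : N.carrier →ₗ[Λ] M.carrier, g = 0 := by
    intro N hN g
    ext x
    exact hf (by simpa using LinearMap.congr_fun (hBm.p3 N hN (f.comp g)) x)
  obtain ⟨g, hg⟩ := embeds (M := B) hM.1 (by rw [hBT] at hMm; exact hMm) hp
  have hs : Function.Surjective (f.comp g) :=
    IsArtinian.surjective_of_injective_endomorphism (f.comp g) (hf.comp hg)
  exact ⟨LinearEquiv.ofBijective f ⟨hf, fun y => (hs y).imp' g fun _ h => h⟩⟩

end Helpers

/-- For each covering pair `T' ⋗ T` in `tors Λ` there exists an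
indecomposable module `M`, unique up to isomorphism, with `T' = Filt(T ∪ {M})`;
moreover `M` is a minimal extending module for `T`.  (Hence `T' = Filt(T ∪ {M}) ↦ [M]`
is inverse to the bijection `η_T : [M] ↦ Filt(T ∪ {M})` from `ME(T)` to the upper
covers of `T`.) -/
theorem statement10 (k : Type) [Field k] (Λ : Type) [Ring Λ] [Algebra k Λ]
    [FiniteDimensional k Λ] (T T' : Set (Mdl Λ)) (hcov : TorsCovers Λ T' T) :
    (∃ M : Mdl Λ, Indec Λ M ∧ IsMinExt Λ T M ∧ T' = FiltSet Λ (insert M T)) ∧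
    (∀ M M' : Mdl Λ, Indec Λ M → Indec Λ M' → T' = FiltSet Λ (insert M T) →
      T' = FiltSet Λ (insert M' T) → MIso Λ M M') := by
  have hN : IsNoetherianRing Λ := IsNoetherianRing.of_finite k Λ
  have hA : IsArtinianRing Λ := IsArtinianRing.of_finite k Λ
  obtain ⟨B, hB, hBm, hBT⟩ := exists_part hcov
  refine ⟨⟨B, hB, hBm, hBT⟩, fun M M' hM hM' hMT hMT' => ?_⟩
  obtain ⟨e⟩ := uniq_part hcov.1 hB hBm hBT hM hMT
  obtain ⟨e'⟩ := uniq_part hcov.1 hB hBm hBT hM' hMT'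
  exact ⟨e.trans e'.symm⟩
end

section
/- If M is a brick over Λ, then M is a minimal co-extending module for the torsion-free class Filt(Gen(M))^⊥. -/
variable (Λ : Type) [Ring Λ]

theorem aux_filt_hom_zero {R : Type} [Ring R] (M X : Mdl R)
    (hX : ∀ f : M.carrier →ₗ[R] X.carrier, f = 0) (N : Mdl R)
    (hN : Filt R (GenSet R M) N) : ∀ f : N.carrier →ₗ[R] X.carrier, f = 0 := by
  induction hN with
  | of_subsingleton N h =>
    intro f
    ext x
    rw [Subsingleton.elim x 0, map_zero, map_zero]
  | step N K G hG hK e ih =>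
    intro f
    obtain ⟨e⟩ := e
    obtain ⟨n, p, hp⟩ := hG
    have h1 : f.comp K.subtype = 0 := ih (f.comp K.subtype)
    have hle : K ≤ LinearMap.ker f := by
      intro x hx
      exact LinearMap.congr_fun h1 ⟨x, hx⟩
    have h2 : ((K.liftQ f hle).comp e.symm.toLinearMap).comp p = 0 := by
      refine LinearMap.pi_ext' fun i => ?_
      rw [LinearMap.zero_comp]
      exact hX _
    ext x
    obtain ⟨y, hy⟩ := hp (e (K.mkQ x))
    have h3 := LinearMap.congr_fun h2 y
    simpa [hy] using h3

theorem aux_mem_perp {R : Type} [Ring R] (M X : Mdl R) (hfin : Module.Finite R X.carrier)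
    (hX : ∀ f : M.carrier →ₗ[R] X.carrier, f = 0) :
    X ∈ Perp R (FiltSet R (GenSet R M)) :=
  ⟨hfin, fun N hN f => aux_filt_hom_zero M X hX N hN f⟩

theorem aux_mem_filt {R : Type} [Ring R] (M : Mdl R) :
    M ∈ FiltSet R (GenSet R M) := by
  refine Filt.step M ⊥ M ⟨1, LinearMap.proj 0, fun x => ⟨fun _ => x, rfl⟩⟩
    (Filt.of_subsingleton _ ?_) ⟨Submodule.quotEquivOfEqBot ⊥ rfl⟩
  change Subsingleton (⊥ : Submodule R M.carrier)
  infer_instance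

/-- If `M` is a brick over `Λ`, then `M` is a minimal co-extending
module for the torsion-free class `Filt(Gen(M))^⊥`. -/
theorem statement14 (k : Type) [Field k] (Λ : Type) [Ring Λ] [Algebra k Λ]
    [FiniteDimensional k Λ] (M : Mdl Λ) (hM : IsBrick Λ M) :
    IsMinCoExt Λ (Perp Λ (FiltSet Λ (GenSet Λ M))) M := by
  obtain ⟨hfin, hnt, hb⟩ := hM
  have hR : IsNoetherianRing Λ := isNoetherian_of_tower k inferInstance
  have hP3 : ∀ F' ∈ Perp Λ (FiltSet Λ (GenSet Λ M)),
      ∀ f : M.carrier →ₗ[Λ] F'.carrier, f = 0 :=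
    fun F' hF f => hF.2 M (aux_mem_filt M) f
  refine ⟨hfin, ?_, ?_, hP3⟩
  · rintro N ⟨i, hi, hns⟩
    refine aux_mem_perp M N (Module.Finite.of_injective i hi) fun g => ?_
    by_contra hg
    have hne : i.comp g ≠ 0 := by
      intro h0
      apply hg
      ext x
      apply hi
      simpa using LinearMap.congr_fun h0 x
    apply hns
    intro y
    obtain ⟨x, hx⟩ := (hb _ hne).2 y
    exact ⟨g x, hx⟩
  · rintro X F' f g ⟨hf, hg, hfg⟩ hns hF
    have hF1 : Module.Finite Λ F'.carrier := hF.1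
    have hXn : IsNoetherian Λ X.carrier := isNoetherian_of_range_eq_ker f g hfg
    refine aux_mem_perp M X inferInstance fun h => ?_
    by_cases h0 : g.comp h = 0
    · have hr : ∀ x, h x ∈ LinearMap.range f := by
        intro x
        rw [hfg]
        exact LinearMap.congr_fun h0 x
      have hz := hP3 F' hF
        ((LinearEquiv.ofInjective f hf).symm.toLinearMap.comp (h.codRestrict _ hr))
      ext x
      have hx := LinearMap.congr_fun hz x
      have hx' : h.codRestrict _ hr x = 0 :=
        (LinearEquiv.ofInjective f hf).symm.map_eq_zero_iff.mp hx
      exact congrArg Subtype.val hx'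
    · exfalso
      apply hns
      let e := LinearEquiv.ofBijective (g.comp h) (hb _ h0)
      refine ⟨h.comp e.symm.toLinearMap, ?_⟩
      ext x
      exact e.apply_symm_apply x
end

section
/- A torsion class T in tors Λ is completely join-irreducible if and only if there exists a brick M such that T = Filt(Gen(M)); in this case the brick M is unique up to isomorphism. -/
variable (Λ : Type) [Ring Λ]

theorem mkMem {T : Set (Mdl Λ)} (hT : IsTorsionClass Λ T) {M : Mdl Λ} (N : Submodule Λ M.carrier)
    (h1 : Mdl.of Λ N ∈ T) (h2 : Mdl.of Λ (M.carrier ⧸ N) ∈ T) : M ∈ T :=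
  hT.ext_closed _ h1 _ h2 M ⟨N.subtype, N.mkQ, N.injective_subtype, N.mkQ_surjective,
    (N.range_subtype).trans N.ker_mkQ.symm⟩

theorem gen_factor (M : Mdl Λ) {X Y : Mdl Λ} (hX : X ∈ GenSet Λ M)
    (f : X.carrier →ₗ[Λ] Y.carrier) (hf : Function.Surjective f) : Y ∈ GenSet Λ M := by
  obtain ⟨n, g, hg⟩ := hX
  exact ⟨n, f.comp g, hf.comp hg⟩

theorem gen_factor2 (M : Mdl Λ) {X Y : Mdl Λ} (hX : X ∈ GenSet Λ M)
    {W : Type} [AddCommGroup W] [Module Λ W] (e : W ≃ₗ[Λ] X.carrier)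
    (f : W →ₗ[Λ] Y.carrier) (hf : Function.Surjective f) : Y ∈ GenSet Λ M := by
  refine gen_factor Λ M hX (f.comp e.symm.toLinearMap) ?_
  have : Function.Surjective (f ∘ e.symm) := hf.comp e.symm.surjective
  exact this

theorem mem_gen (M : Mdl Λ) : M ∈ GenSet Λ M :=
  ⟨1, LinearMap.proj 0, fun x => ⟨fun _ => x, rfl⟩⟩

theorem mem_filt {S : Set (Mdl Λ)} {M : Mdl Λ} (h : M ∈ S) : Filt Λ S M :=
  Filt.step M ⊥ M h (Filt.of_subsingleton _ (inferInstanceAs (Subsingleton (⊥ : Submodule Λ M.carrier))))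
    ⟨Submodule.quotEquivOfEqBot ⊥ rfl⟩

theorem filt_factor (M : Mdl Λ) {X : Mdl Λ} (hX : Filt Λ (GenSet Λ M) X) :
    ∀ (Y : Mdl Λ) (f : X.carrier →ₗ[Λ] Y.carrier), Function.Surjective f →
      Filt Λ (GenSet Λ M) Y := by
  induction hX with
  | of_subsingleton X h =>
    intro Y f hf
    exact Filt.of_subsingleton _ hf.subsingleton
  | step X N Z hZ hN e ih =>
    intro Y f hf
    obtain ⟨e⟩ := e
    refine Filt.step Y (N.map f) (Mdl.of Λ (Y.carrier ⧸ N.map f)) ?_ ?_ ⟨LinearEquiv.refl _ _⟩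
    · refine gen_factor2 Λ M hZ e (N.mapQ (N.map f) f (Submodule.le_comap_map f N)) ?_
      intro y
      obtain ⟨y, rfl⟩ := Submodule.mkQ_surjective _ y
      obtain ⟨x, rfl⟩ := hf y
      exact ⟨N.mkQ x, rfl⟩
    · refine ih (Mdl.of Λ (N.map f)) (f.submoduleMap N) (f.submoduleMap_surjective N)

theorem filt_ext_s15 (M A : Mdl Λ) (hA : Filt Λ (GenSet Λ M) A) {B : Mdl Λ}
    (hB : Filt Λ (GenSet Λ M) B) : ∀ X : Mdl Λ, ExtOf Λ X A B → Filt Λ (GenSet Λ M) X := by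
  induction hB with
  | of_subsingleton B h =>
    rintro X ⟨f, g, hf, hg, hfg⟩
    refine filt_factor Λ M hA X f ?_
    intro x
    have : x ∈ LinearMap.ker g := Subsingleton.elim _ _
    rwa [← hfg] at this
  | step B N Z hZ hN e ih =>
    rintro X ⟨f, g, hf, hg, hfg⟩
    obtain ⟨e⟩ := e
    have hmem : ∀ a, f a ∈ N.comap g := fun a => by
      have : f a ∈ LinearMap.ker g := hfg ▸ ⟨a, rfl⟩
      rw [LinearMap.mem_ker] at this
      simp [this]
    refine Filt.step X (N.comap g) (Mdl.of Λ (X.carrier ⧸ N.comap g)) ?_ ?_ ⟨LinearEquiv.refl _ _⟩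
    · have hs : Function.Surjective (N.mkQ.comp g) := N.mkQ_surjective.comp hg
      have hk : LinearMap.ker (N.mkQ.comp g) = N.comap g := by
        rw [LinearMap.ker_comp, Submodule.ker_mkQ]
      exact gen_factor2 Λ M hZ e (((Submodule.quotEquivOfEq _ _ hk).symm.trans
        ((N.mkQ.comp g).quotKerEquivOfSurjective hs)).symm.toLinearMap)
        (LinearEquiv.surjective _)
    · refine ih (Mdl.of Λ (N.comap g)) ⟨f.codRestrict _ hmem, g.restrict (fun x hx => hx), ?_, ?_, ?_⟩
      · intro a b h
        exact hf (congrArg Subtype.val h)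
      · rintro ⟨b, hb⟩
        obtain ⟨x, rfl⟩ := hg b
        exact ⟨⟨x, hb⟩, rfl⟩
      · ext ⟨x, hx⟩
        constructor
        · rintro ⟨a, ha⟩
          have h1 : f a = x := congrArg Subtype.val ha
          have : x ∈ LinearMap.ker g := hfg ▸ ⟨a, h1⟩
          exact Subtype.ext this
        · intro h
          have : x ∈ LinearMap.ker g := congrArg Subtype.val h
          rw [← hfg] at this
          obtain ⟨a, ha⟩ := this
          exact ⟨a, Subtype.ext ha⟩

theorem filt_fin (M : Mdl Λ) (hM : Module.Finite Λ M.carrier) {X : Mdl Λ}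
    (hX : Filt Λ (GenSet Λ M) X) : Module.Finite Λ X.carrier := by
  induction hX with
  | of_subsingleton X h => infer_instance
  | step X N Z hZ hN e ih =>
    obtain ⟨e⟩ := e
    obtain ⟨n, f, hf⟩ := hZ
    have h1 : Module.Finite Λ Z.carrier := Module.Finite.of_surjective f hf
    have h2 : Module.Finite Λ (X.carrier ⧸ N) := Module.Finite.equiv e.symm
    have h3 : Module.Finite Λ N := ih
    exact Module.Finite.of_submodule_quotient N

theorem filt_tors (M : Mdl Λ) (hM : Module.Finite Λ M.carrier) :
    IsTorsionClass Λ (FiltSet Λ (GenSet Λ M)) where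
  fin X hX := filt_fin Λ M hM hX
  zero_mem X h := Filt.of_subsingleton X h
  iso_closed X hX Y e := by
    obtain ⟨e⟩ := e
    exact filt_factor Λ M hX Y e.toLinearMap e.surjective
  factor_closed X hX Y e := by
    obtain ⟨f, hf⟩ := e
    exact filt_factor Λ M hX Y f hf
  ext_closed A hA B hB X hX := filt_ext_s15 Λ M A hA hB X hX

theorem pow_inj (V : Type) [AddCommGroup V] [Module Λ V] (n : ℕ) :
    Function.Injective (LinearMap.single Λ (fun _ : Fin (n+1) => V) 0) := by
  intro a b h
  simpa using congrFun h 0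

theorem pow_exact (V : Type) [AddCommGroup V] [Module Λ V] (n : ℕ) :
    LinearMap.range (LinearMap.single Λ (fun _ : Fin (n+1) => V) 0) =
      LinearMap.ker (LinearMap.funLeft Λ V (Fin.succ : Fin n → Fin (n+1))) := by
  ext x
  constructor
  · rintro ⟨a, rfl⟩
    rw [LinearMap.mem_ker]
    funext i
    simp [LinearMap.funLeft_apply]
  · intro h
    refine ⟨x 0, ?_⟩
    funext i
    refine Fin.cases ?_ (fun j => ?_) i
    · simp
    · have : x j.succ = 0 := congrFun h j
      simp [this]

theorem tpow_mem {T : Set (Mdl Λ)} (hT : IsTorsionClass Λ T) {M : Mdl Λ} (hM : M ∈ T) (n : ℕ) :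
    Mdl.of Λ (Fin n → M.carrier) ∈ T := by
  induction n with
  | zero => exact hT.zero_mem _ (inferInstanceAs (Subsingleton (Fin 0 → M.carrier)))
  | succ n ih =>
    refine hT.ext_closed _ hM _ ih _ ⟨LinearMap.single Λ (fun _ : Fin (n+1) => M.carrier) 0,
      LinearMap.funLeft Λ M.carrier Fin.succ, ?_, ?_, ?_⟩
    · exact pow_inj Λ M.carrier n
    · exact LinearMap.funLeft_surjective_of_injective _ _ _ (Fin.succ_injective n)
    · exact pow_exact Λ M.carrier n

theorem filt_sub_s15 {T : Set (Mdl Λ)} (hT : IsTorsionClass Λ T) {M : Mdl Λ} (hM : M ∈ T) :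
    FiltSet Λ (GenSet Λ M) ⊆ T := by
  intro X hX
  induction hX with
  | of_subsingleton X h => exact hT.zero_mem X h
  | step X N Z hZ hN e ih =>
    obtain ⟨e⟩ := e
    obtain ⟨n, f, hf⟩ := hZ
    have hs : Function.Surjective (e.symm ∘ f) := e.symm.surjective.comp hf
    exact mkMem Λ hT N ih (hT.factor_closed _ (tpow_mem Λ hT hM n) _
      ⟨e.symm.toLinearMap.comp f, hs⟩)

/-- Modules with no nonzero map to `M` form a torsion class. -/
theorem perp_tors (M : Mdl Λ) :
    IsTorsionClass Λ {N : Mdl Λ | Module.Finite Λ N.carrier ∧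
      ∀ f : N.carrier →ₗ[Λ] M.carrier, f = 0} where
  fin X hX := hX.1
  zero_mem X h := ⟨inferInstance, fun f => Subsingleton.elim _ _⟩
  iso_closed X hX Y e := by
    obtain ⟨e⟩ := e
    obtain ⟨h1, h2⟩ := hX
    refine ⟨Module.Finite.equiv e, fun f => ?_⟩
    have := h2 (f.comp e.toLinearMap)
    ext y
    simpa using LinearMap.congr_fun this (e.symm y)
  factor_closed X hX Y e := by
    obtain ⟨e, he⟩ := e
    obtain ⟨h1, h2⟩ := hX
    refine ⟨Module.Finite.of_surjective e he, fun f => ?_⟩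
    have := h2 (f.comp e)
    ext y
    obtain ⟨x, rfl⟩ := he y
    simpa using LinearMap.congr_fun this x
  ext_closed A hA B hB X hX := by
    obtain ⟨f, g, hf, hg, hfg⟩ := hX
    obtain ⟨a1, a2⟩ := hA
    obtain ⟨b1, b2⟩ := hB
    refine ⟨Module.Finite.of_exact (LinearMap.exact_iff.2 hfg.symm) hg, fun h => ?_⟩
    have h1 := a2 (h.comp f)
    have hle : LinearMap.ker g ≤ LinearMap.ker h := by
      rw [← hfg]
      rintro _ ⟨a, rfl⟩
      exact LinearMap.congr_fun h1 a
    have h2 := b2 (((LinearMap.ker g).liftQ h hle).comp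
      (g.quotKerEquivOfSurjective hg).symm.toLinearMap)
    ext x
    have := LinearMap.congr_fun h2 (g x)
    have e : (g.quotKerEquivOfSurjective hg).symm (g x) = (LinearMap.ker g).mkQ x := by
      rw [LinearEquiv.symm_apply_eq]; rfl
    simpa [e] using this

theorem exists_hom {M X : Mdl Λ} (hM : Module.Finite Λ M.carrier)
    (hX : X ∈ FiltSet Λ (GenSet Λ M)) (hn : Nontrivial X.carrier) :
    ∃ f : M.carrier →ₗ[Λ] X.carrier, f ≠ 0 := by
  by_contra! h
  have := (filt_sub_s15 Λ (perp_tors Λ X) (M := M) ⟨hM, h⟩ hX).2 LinearMap.id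
  obtain ⟨x, hx⟩ := exists_ne (0 : X.carrier)
  exact hx (LinearMap.congr_fun this x)

theorem brick_surj {M X : Mdl Λ} (hM : IsBrick Λ M) (hX : X ∈ FiltSet Λ (GenSet Λ M))
    (f : X.carrier →ₗ[Λ] M.carrier) (hf : f ≠ 0) : Function.Surjective f := by
  have hI : Mdl.of Λ (LinearMap.range f) ∈ FiltSet Λ (GenSet Λ M) :=
    filt_factor Λ M hX (Mdl.of Λ (LinearMap.range f)) f.rangeRestrict f.surjective_rangeRestrict
  have hn : Nontrivial (LinearMap.range f) := by
    rw [Submodule.nontrivial_iff_ne_bot]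
    rwa [Ne, LinearMap.range_eq_bot]
  obtain ⟨g, hg⟩ := exists_hom Λ hM.1 hI hn
  have h0 : (LinearMap.range f).subtype.comp g ≠ 0 := by
    intro h
    apply hg
    refine LinearMap.ext fun x => Subtype.ext ?_
    exact LinearMap.congr_fun h x
  intro m
  obtain ⟨y, hy⟩ := (hM.2.2 _ h0).2 m
  obtain ⟨x, hx⟩ := (g y).2
  exact ⟨x, hx.trans hy⟩

theorem join_tors {A : Set (Set (Mdl Λ))} {T : Set (Mdl Λ)} (hT : IsTorsionClass Λ T)
    (hA : ∀ S ∈ A, S ⊆ T) : IsTorsionClass Λ (TorsJoin Λ A) where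
  fin X hX := hT.fin X (hX T ⟨hT, hA⟩)
  zero_mem X h := fun U hU => hU.1.zero_mem X h
  iso_closed X hX Y e := fun U hU => hU.1.iso_closed X (hX U hU) Y e
  factor_closed X hX Y e := fun U hU => hU.1.factor_closed X (hX U hU) Y e
  ext_closed A hA B hB X e := fun U hU => hU.1.ext_closed A (hA U hU) B (hB U hU) X e

theorem exists_brick [IsNoetherianRing Λ] [IsArtinianRing Λ] {T U : Set (Mdl Λ)}
    (hT : IsTorsionClass Λ T) (hU : IsTorsionClass Λ U) (h : ¬ T ⊆ U) :
    ∃ M, IsBrick Λ M ∧ M ∈ T ∧ M ∉ U := by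
  obtain ⟨X, hXT, hXU⟩ := Set.not_subset.1 h
  have := hT.fin X hXT
  obtain ⟨K, hK, hmax⟩ := (wellFounded_gt (α := Submodule Λ X.carrier)).has_min
    {K : Submodule Λ X.carrier | Mdl.of Λ (X.carrier ⧸ K) ∉ U} ⟨⊥, fun hb =>
      hXU (hU.iso_closed _ hb _ ⟨Submodule.quotEquivOfEqBot ⊥ rfl⟩)⟩
  have key : ∀ (N : Mdl Λ) (f : (X.carrier ⧸ K) →ₗ[Λ] N.carrier), Function.Surjective f →
      ¬ Function.Injective f → N ∈ U := by
    intro N f hf hi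
    have hs : Function.Surjective (f.comp K.mkQ) := hf.comp K.mkQ_surjective
    by_contra hN
    refine hmax (LinearMap.ker (f.comp K.mkQ)) (fun hb => hN (hU.iso_closed _ hb _
      ⟨(f.comp K.mkQ).quotKerEquivOfSurjective hs⟩)) ?_
    refine lt_of_le_of_ne (fun x hx => ?_) (fun heq => hi ?_)
    · simp [(Submodule.Quotient.mk_eq_zero K).2 hx]
    · rw [← LinearMap.ker_eq_bot, eq_bot_iff]
      intro y hy
      obtain ⟨x, rfl⟩ := K.mkQ_surjective y
      have : x ∈ K := by rw [heq]; exact hy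
      simpa using this
  refine ⟨Mdl.of Λ (X.carrier ⧸ K), ⟨inferInstanceAs (Module.Finite Λ (X.carrier ⧸ K)), ?_, ?_⟩,
    hT.factor_closed _ hXT _ ⟨K.mkQ, K.mkQ_surjective⟩, hK⟩
  · by_contra hn
    exact hK (hU.zero_mem _ (not_nontrivial_iff_subsingleton.1 hn))
  · intro f hf
    change (X.carrier ⧸ K) →ₗ[Λ] (X.carrier ⧸ K) at f
    have hi : Function.Injective f := by
      by_contra hi
      refine hK (mkMem Λ hU (M := Mdl.of Λ (X.carrier ⧸ K)) (LinearMap.range f) ?_ ?_)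
      · refine key (Mdl.of Λ (LinearMap.range f)) f.rangeRestrict f.surjective_rangeRestrict ?_
        intro h
        exact hi (fun a b hab => h (Subtype.ext hab))
      · refine key (Mdl.of Λ ((X.carrier ⧸ K) ⧸ LinearMap.range f)) (LinearMap.range f).mkQ
          (Submodule.mkQ_surjective _) ?_
        intro h
        change Function.Injective (LinearMap.range f).mkQ at h
        rw [← LinearMap.ker_eq_bot, Submodule.ker_mkQ, LinearMap.range_eq_bot] at h
        exact hf h
    exact ⟨hi, IsArtinian.surjective_of_injective_endomorphism f hi⟩

/-- A torsion class `T` in `tors Λ` is completely join-irreducible if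
and only if `T = Filt(Gen(M))` for some brick `M`; in this case `M` is unique up to
isomorphism. -/
theorem statement15 (k : Type) [Field k] (Λ : Type) [Ring Λ] [Algebra k Λ]
    [FiniteDimensional k Λ] (T : Set (Mdl Λ)) (hT : IsTorsionClass Λ T) :
    (CompletelyJoinIrred Λ T ↔ ∃ M : Mdl Λ, IsBrick Λ M ∧ T = FiltSet Λ (GenSet Λ M)) ∧
    (∀ M M' : Mdl Λ, IsBrick Λ M → IsBrick Λ M' → T = FiltSet Λ (GenSet Λ M) →
      T = FiltSet Λ (GenSet Λ M') → MIso Λ M M') := by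
  have : IsNoetherianRing Λ := IsNoetherianRing.of_finite k Λ
  have : IsArtinianRing Λ := IsArtinianRing.of_finite k Λ
  refine ⟨⟨?_, ?_⟩, ?_⟩
  · rintro ⟨-, hT2⟩
    let A : Set (Set (Mdl Λ)) := {S | IsTorsionClass Λ S ∧ S ⊆ T ∧ S ≠ T}
    have hU : IsTorsionClass Λ (TorsJoin Λ A) := join_tors Λ hT (fun S hS => hS.2.1)
    have hUT : TorsJoin Λ A ⊆ T := fun X hX => hX T ⟨hT, fun S hS => hS.2.1⟩
    have hnot : ¬ T ⊆ TorsJoin Λ A := fun h =>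
      (hT2 A (fun S hS => hS.1) (hUT.antisymm h)).2.2 rfl
    obtain ⟨M, hM, hMT, hMU⟩ := exists_brick Λ hT hU hnot
    refine ⟨M, hM, ?_⟩
    by_contra hne
    have hmem : FiltSet Λ (GenSet Λ M) ∈ A :=
      ⟨filt_tors Λ M hM.1, filt_sub_s15 Λ hT hMT, fun h => hne h.symm⟩
    exact hMU (fun V hV => hV.2 _ hmem (mem_filt Λ (mem_gen Λ M)))
  · rintro ⟨M, hM, rfl⟩
    refine ⟨hT, fun A hA hj => ?_⟩
    by_contra hn
    have hMT : M ∈ FiltSet Λ (GenSet Λ M) := mem_filt Λ (mem_gen Λ M)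
    have hsub : ∀ S ∈ A, S ⊆ FiltSet Λ (GenSet Λ M) := by
      intro S hS X hX
      rw [← hj]
      exact fun V hV => hV.2 S hS hX
    have h1 : M ∈ TorsJoin Λ A := by rw [hj]; exact hMT
    have h2 := (h1 _ ⟨perp_tors Λ M, fun S hS N hN => ⟨(hA S hS).fin N hN, fun f => ?_⟩⟩).2
      LinearMap.id
    · have := hM.2.1
      obtain ⟨x, hx⟩ := exists_ne (0 : M.carrier)
      exact hx (LinearMap.congr_fun h2 x)
    · by_contra hf
      have hs := brick_surj Λ hM (hsub S hS hN) f hf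
      have hMS : M ∈ S := (hA S hS).factor_closed N hN M ⟨f, hs⟩
      have : S = FiltSet Λ (GenSet Λ M) := (hsub S hS).antisymm (filt_sub_s15 Λ (hA S hS) hMS)
      exact hn (this ▸ hS)
  · intro M M' hM hM' h h'
    have hMT : M ∈ T := h ▸ mem_filt Λ (mem_gen Λ M)
    have hMT' : M' ∈ T := h' ▸ mem_filt Λ (mem_gen Λ M')
    obtain ⟨f, hf⟩ := exists_hom Λ hM'.1 (h' ▸ hMT) hM.2.1
    obtain ⟨g, hg⟩ := exists_hom Λ hM.1 (h ▸ hMT') hM'.2.1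
    have hfs := brick_surj Λ hM (h ▸ hMT') f hf
    have hgs := brick_surj Λ hM' (h' ▸ hMT) g hg
    have hs : Function.Surjective (f.comp g) := hfs.comp hgs
    have h0 : f.comp g ≠ 0 := by
      intro h0
      have := hM.2.1
      obtain ⟨x, hx⟩ := exists_ne (0 : M.carrier)
      obtain ⟨y, rfl⟩ := hs x
      exact hx (LinearMap.congr_fun h0 y)
    have hi : Function.Injective (f ∘ g) := (hM.2.2 _ h0).1
    exact ⟨LinearEquiv.ofBijective g ⟨hi.of_comp, hgs⟩⟩
end

section
/- Let L be a complete lattice and suppose ⋁A is the canonical join representation of an element w ∈ L. Then for every subset A' ⊆ A, the join ⋁A' is the canonical join representation of the element ⋁A'. -/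
/-- A join representation `⋁ A` (of the element `⋁ A`) in a complete lattice is
irredundant if every proper subset has strictly smaller join. -/
def JoinIrredundant {L : Type*} [CompleteLattice L] (A : Set L) : Prop :=
  ∀ B : Set L, B ⊂ A → sSup B < sSup A

/-- `A` is the canonical join representation of its join `⋁ A` in a complete lattice:
`⋁ A` is irredundant, and for every irredundant join representation `⋁ B` of the same
element one has `A ≪ B`, i.e. every `a ∈ A` satisfies `a ≤ b` for some `b ∈ B`. -/
def IsCanonicalJoinRep {L : Type*} [CompleteLattice L] (A : Set L) : Prop :=
  JoinIrredundant A ∧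
    ∀ B : Set L, sSup B = sSup A → JoinIrredundant B → ∀ a ∈ A, ∃ b ∈ B, a ≤ b

theorem joinIrredundant_iff' {L : Type*} [CompleteLattice L] (A : Set L) :
    JoinIrredundant A ↔ ∀ x ∈ A, ¬ x ≤ sSup (A \ {x}) := by
  constructor
  · intro h x hx hle
    have h1 := h (A \ {x}) ⟨Set.diff_subset, fun hs => (hs hx).2 rfl⟩
    refine absurd h1 (not_lt_of_ge (sSup_le fun y hy => ?_))
    by_cases e : y = x
    · rw [e]; exact hle
    · exact le_sSup ⟨hy, e⟩
  · intro h B hB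
    obtain ⟨x, hx, hxB⟩ := Set.exists_of_ssubset hB
    refine lt_of_le_of_ne (sSup_le_sSup hB.1) fun e => h x hx ?_
    calc x ≤ sSup A := le_sSup hx
      _ = sSup B := e.symm
      _ ≤ sSup (A \ {x}) := sSup_le_sSup fun y hy => ⟨hB.1 hy, fun e => hxB (e ▸ hy)⟩

theorem canonical_sup {L : Type*} [CompleteLattice L] {A : Set L}
    (hA : IsCanonicalJoinRep A) {a x y : L} (ha : a ∈ A) (h : x ⊔ y = sSup A) :
    a ≤ x ∨ a ≤ y := by
  have haw : a ≤ x ⊔ y := h ▸ le_sSup ha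
  by_cases h1 : x ≤ y
  · right; rwa [sup_eq_right.2 h1] at haw
  by_cases h2 : y ≤ x
  · left; rwa [sup_eq_left.2 h2] at haw
  obtain ⟨b, hb, hab⟩ := hA.2 {x, y} (by rw [sSup_pair, h]) (by
    rw [joinIrredundant_iff']
    rintro z (rfl | rfl) hz
    · refine h1 (hz.trans (sSup_le ?_))
      rintro t ⟨rfl | rfl, ht⟩
      · exact absurd rfl ht
      · exact le_rfl
    · refine h2 (hz.trans (sSup_le ?_))
      rintro t ⟨rfl | rfl, ht⟩
      · exact le_rfl
      · exact absurd rfl ht) a ha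
  rcases hb with rfl | rfl
  · exact Or.inl hab
  · exact Or.inr hab

/-- If `⋁ A` is the canonical join representation of an element `w` of
a complete lattice `L`, then for every subset `A' ⊆ A` the join `⋁ A'` is the canonical
join representation of the element `⋁ A'`. -/
theorem statement16 {L : Type*} [CompleteLattice L] (A : Set L)
    (hA : IsCanonicalJoinRep A) (A' : Set L) (hA' : A' ⊆ A) :
    IsCanonicalJoinRep A' := by
  have hI := (joinIrredundant_iff' A).1 hA.1
  refine ⟨(joinIrredundant_iff' A').2 fun x hx hle => hI x (hA' hx)
    (hle.trans (sSup_le_sSup (Set.diff_subset_diff_left hA'))), fun B hB hBi a ha => ?_⟩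
  have hsup : sSup (B ∪ (A \ A')) = sSup A := by
    rw [sSup_union, hB, ← sSup_union, Set.union_diff_cancel hA']
  have hirr : JoinIrredundant (B ∪ (A \ A')) := by
    rw [joinIrredundant_iff']
    intro x hx hle
    by_cases hxA : x ∈ A \ A'
    · refine hI x hxA.1 (hle.trans (sSup_le ?_))
      rintro z ⟨hz | hz, hzx⟩
      · exact (le_sSup hz).trans (hB.le.trans
          (sSup_le_sSup fun t ht => ⟨hA' ht, fun e => hxA.2 (e ▸ ht)⟩))
      · exact le_sSup ⟨hz.1, hzx⟩
    · have hxB : x ∈ B := hx.resolve_right hxA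
      have hxn := (joinIrredundant_iff' B).1 hBi x hxB
      have : ∃ c ∈ A', ¬ c ≤ sSup (B \ {x}) := by
        by_contra! hc
        exact hxn ((le_sSup hxB).trans (hB.le.trans (sSup_le hc)))
      obtain ⟨c, hc, hcn⟩ := this
      have hxle : x ≤ sSup (A \ {c}) ⊔ sSup (B \ {x}) := by
        refine hle.trans (sSup_le ?_)
        rintro z ⟨hz | hz, hzx⟩
        · exact le_sup_of_le_right (le_sSup ⟨hz, hzx⟩)
        · exact le_sup_of_le_left (le_sSup ⟨hz.1, fun e => hz.2 (e ▸ hc)⟩)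
      have hcle : c ≤ sSup (A \ {c}) ⊔ sSup (B \ {x}) := by
        refine (le_sSup hc).trans (hB.ge.trans (sSup_le fun z hz => ?_))
        by_cases e : z = x
        · rw [e]; exact hxle
        · exact le_sup_of_le_right (le_sSup ⟨hz, e⟩)
      have heq : sSup (A \ {c}) ⊔ sSup (B \ {x}) = sSup A := by
        apply le_antisymm
        · refine sup_le (sSup_le_sSup Set.diff_subset) ?_
          exact (sSup_le_sSup Set.diff_subset).trans (hB.le.trans (sSup_le_sSup hA'))
        · refine sSup_le fun z hz => ?_
          by_cases e : z = c
          · rw [e]; exact hcle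
          · exact le_sup_of_le_left (le_sSup ⟨hz, e⟩)
      rcases canonical_sup hA (hA' hc) heq with h | h
      · exact hI c (hA' hc) h
      · exact hcn h
  obtain ⟨b, hb | hb, hab⟩ := hA.2 _ hsup hirr a (hA' ha)
  · exact ⟨b, hb, hab⟩
  · exact (hI a (hA' ha) (hab.trans (le_sSup ⟨hb.1, fun e => hb.2 (e ▸ ha)⟩))).elim
end
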